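/- Let n be a positive even integer and let f ∈ ℝ[x] be a monic polynomial of degree n with n distinct complex roots, of which exactly r₁ are real and 2r₂ are non-real (so r₁ + 2r₂ = n). Let V_f be the set of pairs (A,B) of real symmetric n×n matrices with (−1)^{n/2}·det(x·A − B) = f(x), on which SL_n(ℝ) acts by γ·(A,B) = (γᵀAγ, γᵀBγ). If r₁ = 0, then V_f is nonempty, is the union of exactly 2 SL_n(ℝ)-orbits, and the stabiliser in SL_n(ℝ) of every element of V_f has order 2^{r₂}. If r₁ > 0, then V_f is the union of exactly 2^{r₁−1} SL_n(ℝ)-orbits, and the stabiliser in SL_n(ℝ) of every element of V_f has order 2^{r₁+r₂−1}. -/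

import Mathlib

/-!
The resolvent condition forces `det A = (-1) ^ (n / 2)`, and `A⁻¹B` is an operator which is
self-adjoint for `A` and has characteristic polynomial `f`. Its complex eigenvectors for the
distinct roots `μ i` of `f` form an `A`-orthogonal basis. They can be chosen compatibly with complex
conjugation, which permutes the roots by an involution `σ`, and scaled so that the Gram matrix of
`A` becomes `diagonal ε`, where `ε i = ±1` at the real roots and `ε i = 1` at the others. Such a
matrix of eigenvectors is called a `Frame` here.

* Two frames of the same pair have the same `ε` and differ by signs `δ i` of the columns with
  `δ ∘ σ = δ` (`Frame.unique`).
* If two pairs have frames `P`, `P'` with the same `ε` and the same determinant, then `P * P'⁻¹` is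
  invariant under conjugation, hence a real matrix of determinant `1` which carries one pair to the
  other (`Frame.exists_equiv`).
* Since conjugation multiplies `det P` by `sign σ`, one gets `(det P) ^ 2 = sign σ` and
  `∏ ε i = sign σ * (-1) ^ (n / 2)` (`Frame.det_eq`). All `ε` and `det P` subject to these
  conditions occur, by a rescaled Vandermonde matrix (`exists_pair`).

So the stabiliser of a pair is the group of `σ`-invariant sign vectors with product `1`. If there
is a real root, the sign of `det P` can be changed by flipping the column at that root, so orbits
correspond to the sign vectors on the `r₁` real roots with prescribed product, of which there are
`2 ^ (r₁ - 1)`. If there is no real root, then `ε = 1` and a `σ`-invariant sign vector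
automatically has product `1`; hence `det P` is an invariant of the orbit, and its two possible
values give two orbits.
-/

open Polynomial
open scoped Matrix

/-- `ResPair n f A B` says that `(A, B)` is a pair of real symmetric `n × n` matrices with
resolvent polynomial `(−1)^(n/2) · det (x·A − B) = f`. -/
def ResPair (n : ℕ) (f : Polynomial ℝ) (A B : Matrix (Fin n) (Fin n) ℝ) : Prop :=
  A.IsSymm ∧ B.IsSymm ∧
    (-1 : Polynomial ℝ) ^ (n / 2) *
      ((X : Polynomial ℝ) • A.map (fun a => C a) - B.map (fun a => C a)).det = f

/-- `OrbEquiv n A B A' B'` says that `(A', B')` lies in the `SL_n(ℝ)`-orbit of `(A, B)`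
under the action `γ · (A,B) = (γᵀAγ, γᵀBγ)`. -/
def OrbEquiv (n : ℕ) (A B A' B' : Matrix (Fin n) (Fin n) ℝ) : Prop :=
  ∃ γ : Matrix.SpecialLinearGroup (Fin n) ℝ,
    A' = (γ : Matrix (Fin n) (Fin n) ℝ)ᵀ * A * (γ : Matrix (Fin n) (Fin n) ℝ) ∧
    B' = (γ : Matrix (Fin n) (Fin n) ℝ)ᵀ * B * (γ : Matrix (Fin n) (Fin n) ℝ)


namespace RealOrbits

/-! ### Enumerating the complex roots and counting sign vectors -/

/-- An enumeration `μ` of the complex roots of `f`, together with the permutation `σ` of the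
indices which complex conjugation induces. The fixed points of `σ` are the real roots. -/
lemma exists_enumeration (n r₁ : ℕ) (f : Polynomial ℝ) (hf : f.Monic) (hdeg : f.natDegree = n)
    (hdist : (f.map (algebraMap ℝ ℂ)).roots.toFinset.card = n)
    (hreal : f.roots.toFinset.card = r₁) :
    ∃ (μ : Fin n → ℂ) (σ : Equiv.Perm (Fin n)), Function.Injective μ ∧
      f.map (algebraMap ℝ ℂ) = ∏ i, (X - C (μ i)) ∧
      (∀ i, μ (σ i) = star (μ i)) ∧ Nat.card {i // σ i = i} = r₁ := by
  classical
  set g := f.map (algebraMap ℝ ℂ) with hg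
  have hgm : g.Monic := hf.map _
  have hgd : g.natDegree = n := by rw [hg, hf.natDegree_map, hdeg]
  have hcard : g.roots.card = n := by
    apply le_antisymm
    · exact (Polynomial.card_roots' g).trans hgd.le
    · rw [← hdist]; exact Multiset.toFinset_card_le _
  have hnodup : g.roots.Nodup := by
    rw [← Multiset.toFinset_card_eq_card_iff_nodup, hdist, hcard]
  let e : Fin n ≃ g.roots.toFinset := (Finset.equivFinOfCardEq hdist).symm
  have hroot : ∀ z : ℂ, z ∈ g.roots.toFinset ↔ g.eval z = 0 := by
    intro z
    rw [Multiset.mem_toFinset, Polynomial.mem_roots hgm.ne_zero]; rfl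
  have hstar : ∀ z : ℂ, z ∈ g.roots.toFinset → star z ∈ g.roots.toFinset := by
    intro z hz
    rw [hroot] at hz ⊢
    have h1 : aeval z f = 0 := by
      rw [← Polynomial.eval_map_algebraMap]; exact hz
    have h2 : aeval (star z) f = 0 := by
      have := Polynomial.aeval_conj f z
      rw [h1, map_zero] at this
      exact this
    rw [← Polynomial.eval_map_algebraMap] at h2; exact h2
  let c : Equiv.Perm g.roots.toFinset :=
    { toFun := fun z => ⟨star z.1, hstar _ z.2⟩
      invFun := fun z => ⟨star z.1, hstar _ z.2⟩
      left_inv := fun z => by simp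
      right_inv := fun z => by simp }
  refine ⟨fun i => (e i : ℂ), (e.trans c).trans e.symm, ?_, ?_, ?_, ?_⟩
  · exact Subtype.val_injective.comp e.injective
  · have h := Polynomial.prod_multiset_X_sub_C_of_monic_of_roots_card_eq hgm (hcard.trans hgd.symm)
    rw [e.prod_comp (fun z : g.roots.toFinset => X - C (z : ℂ)),
      Finset.prod_coe_sort g.roots.toFinset (fun z => X - C z), Finset.prod,
      Multiset.toFinset_val, hnodup.dedup, h]
  · intro i
    simp [c]
  · rw [← hreal, ← Nat.card_eq_finsetCard]
    symm
    have hmem : ∀ x : f.roots.toFinset, ((x : ℝ) : ℂ) ∈ g.roots.toFinset := by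
      intro x
      rw [hroot, hg]
      have hx := x.2
      rw [Multiset.mem_toFinset, Polynomial.mem_roots hf.ne_zero] at hx
      have : f.eval (x : ℝ) = 0 := hx
      have h2 := Polynomial.eval_map_apply (f := algebraMap ℝ ℂ) (p := f) (x : ℝ)
      rw [this, map_zero] at h2
      exact h2
    refine Nat.card_eq_of_bijective
      (fun x => ⟨e.symm ⟨((x : ℝ) : ℂ), hmem x⟩, by simp [c]⟩) ⟨?_, ?_⟩
    · intro x y hxy
      simp only [Subtype.mk.injEq, EmbeddingLike.apply_eq_iff_eq, Complex.ofReal_inj] at hxy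
      exact Subtype.ext hxy
    · rintro ⟨i, hi⟩
      have h1 : star (e i : ℂ) = e i := by
        have := congrArg e hi
        simp only [Equiv.trans_apply, Equiv.apply_symm_apply] at this
        exact congrArg Subtype.val this
      have h2 : (((e i : ℂ).re : ℝ) : ℂ) = e i := Complex.conj_eq_iff_re.mp h1
      refine ⟨⟨(e i : ℂ).re, ?_⟩, ?_⟩
      · rw [Multiset.mem_toFinset, Polynomial.mem_roots hf.ne_zero]
        have h3 := (hroot _).mp (e i).2
        rw [← h2] at h3
        have h4 := Polynomial.eval_map_apply (f := algebraMap ℝ ℂ) (p := f) (e i : ℂ).re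
        have h5 : (algebraMap ℝ ℂ) (f.eval (e i : ℂ).re) = 0 := by rw [← h4]; exact h3
        exact (map_eq_zero _).mp h5
      · apply Subtype.ext
        simp only
        rw [Equiv.symm_apply_eq]
        exact Subtype.ext h2

/-- Fixing the product of the signs over a nonempty subset of the indices halves the number of
sign vectors, because flipping the sign at one index of the subset exchanges the two values of
the product. -/
lemma card_signs_prod_eq {T : Type*} [Fintype T] [DecidableEq T] (F : T → Prop) [DecidablePred F]
    (i₀ : T) (hi₀ : F i₀) (s : ℤˣ) :
    Nat.card {g : T → ℤˣ // ∏ i, (if F i then g i else 1) = s} = 2 ^ (Nat.card T - 1) := by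
  classical
  have flip : ∀ g : T → ℤˣ, ∏ i, (if F i then Function.update g i₀ (-g i₀) i else 1) =
      -∏ i, (if F i then g i else 1) := by
    intro g
    rw [← Finset.mul_prod_erase Finset.univ _ (Finset.mem_univ i₀),
      ← Finset.mul_prod_erase Finset.univ (fun i => if F i then g i else 1) (Finset.mem_univ i₀)]
    have : ∏ x ∈ Finset.univ.erase i₀, (if F x then Function.update g i₀ (-g i₀) x else 1) =
        ∏ x ∈ Finset.univ.erase i₀, (if F x then g x else 1) := by
      apply Finset.prod_congr rfl
      intro x hx
      rw [Function.update_of_ne (Finset.ne_of_mem_erase hx)]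
    rw [this]
    simp [hi₀]
  have hinv : ∀ g : T → ℤˣ, Function.update (Function.update g i₀ (-g i₀)) i₀
      (-(Function.update g i₀ (-g i₀) i₀)) = g := by
    intro g; simp
  have e1 : {g : T → ℤˣ // ∏ i, (if F i then g i else 1) = s} ≃
      {g : T → ℤˣ // ¬ ∏ i, (if F i then g i else 1) = s} :=
    { toFun := fun g => ⟨Function.update g.1 i₀ (-g.1 i₀), by
        rw [flip, g.2]; rcases Int.units_eq_one_or s with rfl | rfl <;> decide⟩
      invFun := fun g => ⟨Function.update g.1 i₀ (-g.1 i₀), by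
        rw [flip, Int.units_ne_iff_eq_neg.mp g.2, neg_neg]⟩
      left_inv := fun g => Subtype.ext (hinv g.1)
      right_inv := fun g => Subtype.ext (hinv g.1) }
  have h2 : Nat.card {g : T → ℤˣ // ∏ i, (if F i then g i else 1) = s} +
      Nat.card {g : T → ℤˣ // ¬ ∏ i, (if F i then g i else 1) = s} = 2 ^ Nat.card T := by
    rw [← Nat.card_sum, Nat.card_congr (Equiv.sumCompl _)]
    simp
  rw [← Nat.card_congr e1] at h2
  have hpos : Nat.card T = Nat.card T - 1 + 1 := by
    have : 0 < Nat.card T := by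
      have : Nonempty T := ⟨i₀⟩
      exact Nat.card_pos
    omega
  rw [hpos, pow_succ] at h2
  omega

section Involution

variable {n : ℕ} {σ : Equiv.Perm (Fin n)}

/-- The indices `i` with `i ≤ σ i` form a transversal of the orbits of the involution `σ`. -/
lemma card_transversal (hσ : ∀ i, σ (σ i) = i) {r₁ r₂ : ℕ} (hn : r₁ + 2 * r₂ = n)
    (hr : Nat.card {i // σ i = i} = r₁) : Nat.card {i // i ≤ σ i} = r₁ + r₂ := by
  classical
  simp only [Nat.card_eq_fintype_card, Fintype.card_subtype] at hr ⊢
  have h1 : (Finset.univ.filter fun i => i ≤ σ i).card =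
      (Finset.univ.filter fun i => σ i = i).card + (Finset.univ.filter fun i => i < σ i).card := by
    rw [← Finset.card_union_of_disjoint]
    · congr 1; ext i; simp [le_iff_eq_or_lt, eq_comm]
    · rw [Finset.disjoint_filter]; intro i _ h; simp [h]
  have h2 : (Finset.univ.filter fun i => i < σ i).card =
      (Finset.univ.filter fun i => σ i < i).card := by
    apply Finset.card_bij (fun i _ => σ i)
    · intro i hi; simpa [hσ] using hi
    · intro i _ j _ h; exact σ.injective h
    · intro i hi; exact ⟨σ i, by simpa [hσ] using hi, hσ i⟩
  have h3 : (Finset.univ.filter fun i => i ≤ σ i).card +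
      (Finset.univ.filter fun i => ¬ i ≤ σ i).card = n := by
    rw [Finset.card_filter_add_card_filter_not]; simp
  simp only [not_le] at h3
  omega

lemma prod_invariant (hσ : ∀ i, σ (σ i) = i) (δ : Fin n → ℤˣ) (hδ : ∀ i, δ (σ i) = δ i) :
    ∏ i, δ i = ∏ i, (if σ i = i then δ i else 1) := by
  have h : ∏ i, (δ i * (if σ i = i then δ i else 1)) = 1 := by
    apply Finset.prod_involution (fun i _ => σ i)
    · intro i _
      by_cases h : σ i = i
      · simp [h]
      · have h' : ¬ i = σ i := fun h' => h h'.symm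
        simp [h, h', hδ, hσ]
    · intro i _ h1 h2
      simp [h2] at h1
    · simp
    · simp [hσ]
  rw [Finset.prod_mul_distrib] at h
  rw [mul_eq_one_iff_eq_inv.mp h, Int.units_inv_eq_self]

/-- Sign vectors invariant under `σ` are determined by their values on a transversal. -/
def invariantEquiv (hσ : ∀ i, σ (σ i) = i) :
    {δ : Fin n → ℤˣ // ∀ i, δ (σ i) = δ i} ≃ ({i // i ≤ σ i} → ℤˣ) where
  toFun δ i := δ.1 i
  invFun g := ⟨fun i => if h : i ≤ σ i then g ⟨i, h⟩ else
      g ⟨σ i, by rw [hσ]; exact (not_le.mp h).le⟩, by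
    intro i
    rcases lt_trichotomy i (σ i) with h | h | h
    · have h' : ¬ σ i ≤ σ (σ i) := by rw [hσ]; exact not_le.mpr h
      simp [h.le, hσ, not_le.mpr h]
    · simp [← h]
    · have h' : ¬ i ≤ σ i := not_le.mpr h
      simp [h.le, h', hσ]⟩
  left_inv δ := by
    apply Subtype.ext
    funext i
    by_cases h : i ≤ σ i <;> simp [h, δ.2]
  right_inv g := by
    funext i
    simp [i.2]

lemma card_invariant_of_fixed (hσ : ∀ i, σ (σ i) = i) {r₁ r₂ : ℕ} (hn : r₁ + 2 * r₂ = n)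
    (hr : Nat.card {i // σ i = i} = r₁) (h0 : 0 < r₁) :
    Nat.card {δ : Fin n → ℤˣ // (∀ i, δ (σ i) = δ i) ∧ ∏ i, δ i = 1} = 2 ^ (r₁ + r₂ - 1) := by
  classical
  obtain ⟨i₀, hi₀⟩ : Nonempty {i // σ i = i} := by
    rw [← hr] at h0
    exact (Nat.card_pos_iff.mp h0).1
  rw [← card_transversal hσ hn hr,
    ← card_signs_prod_eq (T := {i // i ≤ σ i}) (fun i => σ i = i) ⟨i₀, hi₀.ge⟩ hi₀ 1]
  refine Nat.card_congr ((Equiv.subtypeSubtypeEquivSubtypeInter _ _).symm.trans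
    ((invariantEquiv hσ).subtypeEquiv ?_))
  intro δ
  rw [prod_invariant hσ _ δ.2]
  have : ∏ i, (if σ i = i then δ.1 i else 1) =
      ∏ i : {i // i ≤ σ i}, (if σ i = i then δ.1 i else 1) := by
    rw [← Finset.prod_subtype (Finset.univ.filter fun i => i ≤ σ i) (by simp)
      (fun i => if σ i = i then δ.1 i else 1), Finset.prod_filter]
    apply Finset.prod_congr rfl
    intro i _
    by_cases h : σ i = i <;> simp [h]
  rw [this]
  rfl

lemma card_invariant_of_no_fixed (hσ : ∀ i, σ (σ i) = i) {r₂ : ℕ} (hn : 0 + 2 * r₂ = n)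
    (hr : Nat.card {i // σ i = i} = 0) :
    Nat.card {δ : Fin n → ℤˣ // (∀ i, δ (σ i) = δ i) ∧ ∏ i, δ i = 1} = 2 ^ r₂ := by
  classical
  have hfix : ∀ i, σ i ≠ i := by
    intro i hi
    have : IsEmpty {i // σ i = i} := by
      rcases Nat.card_eq_zero.mp hr with h | h
      · exact h
      · exact absurd (inferInstance : Finite {i // σ i = i}) (by simpa using h)
    exact this.false ⟨i, hi⟩
  have e : {δ : Fin n → ℤˣ // (∀ i, δ (σ i) = δ i) ∧ ∏ i, δ i = 1} ≃
      {δ : Fin n → ℤˣ // ∀ i, δ (σ i) = δ i} := by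
    apply Equiv.subtypeEquivRight
    intro δ
    refine ⟨fun h => h.1, fun h => ⟨h, ?_⟩⟩
    rw [prod_invariant hσ _ h]
    simp [hfix]
  rw [Nat.card_congr (e.trans (invariantEquiv hσ))]
  have := card_transversal hσ hn hr
  rw [zero_add] at this
  rw [Nat.card_fun, this]
  simp

/-- A sign vector supported on the fixed points of `σ`, with prescribed product. -/
def Admissible (σ : Equiv.Perm (Fin n)) (s : ℤˣ) (ε : Fin n → ℤˣ) : Prop :=
  (∀ i, σ i ≠ i → ε i = 1) ∧ ∏ i, ε i = s

lemma card_admissible {r₁ : ℕ} (hr : Nat.card {i // σ i = i} = r₁) (h0 : 0 < r₁) (s : ℤˣ) :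
    Nat.card {ε : Fin n → ℤˣ // Admissible σ s ε} = 2 ^ (r₁ - 1) := by
  classical
  obtain ⟨i₀, hi₀⟩ : Nonempty {i // σ i = i} := by
    rw [← hr] at h0
    exact (Nat.card_pos_iff.mp h0).1
  rw [← hr, ← card_signs_prod_eq (T := {i // σ i = i}) (fun _ => True) ⟨i₀, hi₀⟩ trivial s]
  have key : ∀ ε : Fin n → ℤˣ, (∀ i, σ i ≠ i → ε i = 1) →
      ∏ i, ε i = ∏ i : {i // σ i = i}, ε i := by
    intro ε hε
    rw [← Finset.prod_subtype (Finset.univ.filter fun i => σ i = i) (by simp), Finset.prod_filter]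
    apply Finset.prod_congr rfl
    intro i _
    by_cases h : σ i = i
    · simp [h]
    · simp [h, hε i h]
  refine Nat.card_congr
    { toFun := fun ε => ⟨fun i => ε.1 i, by
        simp only [if_true]; rw [← key _ ε.2.1]; exact ε.2.2⟩
      invFun := fun g => ⟨fun i => if h : σ i = i then g.1 ⟨i, h⟩ else 1, ?_, ?_⟩
      left_inv := ?_
      right_inv := ?_ }
  · intro i hi; simp [hi]
  · rw [key]
    · have := g.2
      simp only [if_true] at this
      refine Eq.trans ?_ this
      apply Finset.prod_congr rfl
      intro i _
      simp [i.2]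
    · intro i hi; simp [hi]
  · intro ε
    apply Subtype.ext
    funext i
    by_cases h : σ i = i
    · simp [h]
    · simp [h, ε.2.1 i h]
  · intro g
    apply Subtype.ext
    funext i
    simp [i.2]

/-- The sign of a fixed point free involution. -/
lemma sign_of_no_fixed (hσ : ∀ i, σ (σ i) = i) (hfix : ∀ i, σ i ≠ i) (hn : 0 < n) :
    Equiv.Perm.sign σ = (-1) ^ (n / 2) := by
  have hne : σ ≠ 1 := by
    intro h
    exact hfix ⟨0, hn⟩ (by simp [h])
  have h2 : orderOf σ = 2 := orderOf_eq_prime (by ext i; simp [pow_two, hσ]) hne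
  obtain ⟨k, hk⟩ := Equiv.Perm.cycleType_prime_order (σ := σ) (by rw [h2]; exact Nat.prime_two)
  have hs : σ.cycleType.sum = n := by
    rw [Equiv.Perm.sum_cycleType]
    have : σ.support = Finset.univ := by ext i; simp [hfix]
    simp [this]
  rw [Equiv.Perm.sign_of_cycleType]
  rw [hk, h2] at hs ⊢
  simp only [Multiset.sum_replicate, smul_eq_mul, Multiset.card_replicate] at hs ⊢
  have : n / 2 = k + 1 := by omega
  rw [this, pow_add, mul_comm (k + 1) 2, pow_mul]
  simp

/-- A family of objects with a prescribed property can be chosen compatibly with a conjugation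
as soon as a self-conjugate choice exists at the fixed points of `σ`. -/
lemma exists_conj_family {Y : Type*} [InvolutiveStar Y] (hσ : ∀ i, σ (σ i) = i)
    (Φ : Fin n → Y → Prop) (hΦ : ∀ i y, Φ i y → Φ (σ i) (star y))
    (hex : ∀ i, ∃ y, Φ i y) (hfix : ∀ i, σ i = i → ∃ y, Φ i y ∧ star y = y) :
    ∃ y : Fin n → Y, (∀ i, Φ i (y i)) ∧ ∀ i, star (y i) = y (σ i) := by
  have h : ∀ i, ∃ y, Φ i y ∧ (σ i = i → star y = y) := by
    intro i
    by_cases hi : σ i = i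
    · obtain ⟨y, h1, h2⟩ := hfix i hi
      exact ⟨y, h1, fun _ => h2⟩
    · obtain ⟨y, h1⟩ := hex i
      exact ⟨y, h1, fun h => absurd h hi⟩
  choose y hy1 hy2 using h
  refine ⟨fun i => if i ≤ σ i then y i else star (y (σ i)), ?_, ?_⟩
  · intro i
    by_cases h : i ≤ σ i
    · simpa [h] using hy1 i
    · have := hΦ _ _ (hy1 (σ i))
      rw [hσ] at this
      simpa [h] using this
  · intro i
    rcases lt_trichotomy i (σ i) with h | h | h
    · simp [h.le, hσ, not_le.mpr h]
    · simp [← h, hy2 i h.symm]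
    · have h' : ¬ i ≤ σ i := not_le.mpr h
      simp [h.le, h', hσ]

end Involution

/-! ### Complex matrices with a conjugation symmetry -/

section Frames

variable {n : ℕ}

/-- Extension of scalars of a real matrix to `ℂ`. -/
def cx (M : Matrix (Fin n) (Fin n) ℝ) : Matrix (Fin n) (Fin n) ℂ := M.map Complex.ofRealHom

lemma cx_mul (M N : Matrix (Fin n) (Fin n) ℝ) : cx (M * N) = cx M * cx N := Matrix.map_mul

lemma cx_transpose (M : Matrix (Fin n) (Fin n) ℝ) : cx Mᵀ = (cx M)ᵀ := rfl

lemma cx_det (M : Matrix (Fin n) (Fin n) ℝ) : (cx M).det = (M.det : ℂ) :=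
  (RingHom.map_det Complex.ofRealHom M).symm

lemma cx_injective : Function.Injective (cx : Matrix (Fin n) (Fin n) ℝ → _) :=
  Matrix.map_injective Complex.ofReal_injective

lemma exists_cx_eq {M : Matrix (Fin n) (Fin n) ℂ} (h : ∀ a b, star (M a b) = M a b) :
    ∃ N, cx N = M := by
  refine ⟨M.map Complex.re, ?_⟩
  ext a b
  exact Complex.conj_eq_iff_re.mp (h a b)

/-- The columns of `P` are permuted by `σ` under complex conjugation. -/
def ConjCols (σ : Equiv.Perm (Fin n)) (P : Matrix (Fin n) (Fin n) ℂ) : Prop :=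
  ∀ a i, star (P a i) = P a (σ i)

variable {σ : Equiv.Perm (Fin n)} {P P' : Matrix (Fin n) (Fin n) ℂ}

lemma ConjCols.cx_mul (hP : ConjCols σ P) (M : Matrix (Fin n) (Fin n) ℝ) :
    ConjCols σ (cx M * P) := by
  intro a i
  simp only [Matrix.mul_apply, star_sum, star_mul', hP _ i]
  apply Finset.sum_congr rfl
  intro b _
  congr 1
  exact Complex.conj_ofReal _

lemma ConjCols.mul_diagonal (hP : ConjCols σ P) {c : Fin n → ℂ} (hc : ∀ i, star (c i) = c (σ i)) :
    ConjCols σ (P * Matrix.diagonal c) := by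
  intro a i
  simp only [Matrix.mul_diagonal, star_mul', hP _ i, hc]

lemma ConjCols.star_det (hP : ConjCols σ P) :
    star P.det = ((Equiv.Perm.sign σ : ℤ) : ℂ) * P.det := by
  rw [← Matrix.det_permute' σ P]
  have h : star P.det = (P.map (starRingEnd ℂ)).det := RingHom.map_det (starRingEnd ℂ) P
  rw [h]
  congr 1
  ext a i
  exact hP a i

/-- The rows of the inverse of `P` are permuted by `σ` under complex conjugation. -/
lemma ConjCols.star_inv (hP : ConjCols σ P) (hdet : P.det ≠ 0) (i a : Fin n) :
    star (P⁻¹ i a) = P⁻¹ (σ i) a := by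
  have h1 : P⁻¹ * P = 1 := Matrix.nonsing_inv_mul _ (isUnit_iff_ne_zero.mpr hdet)
  have h2 : P.map (starRingEnd ℂ) = P.submatrix id σ := by ext a i; exact hP a i
  have h3 : P⁻¹.map (starRingEnd ℂ) * P.map (starRingEnd ℂ) = 1 := by
    rw [← Matrix.map_mul, h1]; simp
  have h4 : P⁻¹.submatrix σ id * P.map (starRingEnd ℂ) = 1 := by
    rw [h2]
    have := Matrix.submatrix_mul_equiv P⁻¹ P σ (Equiv.refl _) σ
    simp only [Equiv.coe_refl] at this
    rw [this, h1]
    simp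
  have h5 : P⁻¹.map (starRingEnd ℂ) = P⁻¹.submatrix σ id := by
    rw [← Matrix.inv_eq_left_inv h3, Matrix.inv_eq_left_inv h4]
  exact congrFun (congrFun h5 i) a

/-- The conjugation symmetries of the factors cancel, so that the product is a real matrix. -/
lemma exists_cx_eq_mul {L R : Matrix (Fin n) (Fin n) ℂ} {c : Fin n → ℂ}
    (hL : ∀ a i, star (L a i) = L a (σ i)) (hR : ∀ i a, star (R i a) = R (σ i) a)
    (hc : ∀ i, star (c i) = c (σ i)) : ∃ N, cx N = L * Matrix.diagonal c * R := by
  apply exists_cx_eq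
  intro a b
  rw [Matrix.mul_apply]
  simp only [Matrix.mul_diagonal, star_sum, star_mul', hL, hR, hc]
  exact Equiv.sum_comp σ (fun i => L a i * c i * R i b)

/-! ### Normal forms -/

/-- `P` brings the pair `(A, B)` into the normal form given by the signs `ε`: its columns are
eigenvectors of `A⁻¹B` for the eigenvalues `μ i`, chosen compatibly with complex conjugation and
scaled such that the Gram matrix of `A` is `diagonal ε`, with `ε i = 1` at the non-real `μ i`. -/
structure Frame (σ : Equiv.Perm (Fin n)) (μ : Fin n → ℂ) (A B : Matrix (Fin n) (Fin n) ℝ)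
    (ε : Fin n → ℤˣ) (P : Matrix (Fin n) (Fin n) ℂ) : Prop where
  one_of_ne : ∀ i, σ i ≠ i → ε i = 1
  conj : ConjCols σ P
  hA : Pᵀ * cx A * P = Matrix.diagonal fun i => ((ε i : ℤ) : ℂ)
  hB : Pᵀ * cx B * P = Matrix.diagonal fun i => ((ε i : ℤ) : ℂ) * μ i

variable {μ : Fin n → ℂ} {A B A' B' : Matrix (Fin n) (Fin n) ℝ} {ε ε' : Fin n → ℤˣ}

lemma sign_invariant (hσ : ∀ i, σ (σ i) = i) (h : ∀ i, σ i ≠ i → ε i = 1) (i : Fin n) :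
    ε (σ i) = ε i := by
  by_cases hi : σ i = i
  · rw [hi]
  · rw [h i hi, h (σ i) (by rw [hσ]; exact fun h => hi h.symm)]

lemma unit_cast_ne_zero (u : ℤˣ) : ((u : ℤ) : ℂ) ≠ 0 := by
  exact_mod_cast u.ne_zero

lemma unit_cast_sq (u : ℤˣ) : ((u : ℤ) : ℂ) * ((u : ℤ) : ℂ) = 1 := by
  rcases Int.units_eq_one_or u with rfl | rfl <;> simp

lemma unit_cast_injective {u v : ℤˣ} (h : ((u : ℤ) : ℂ) = ((v : ℤ) : ℂ)) : u = v :=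
  Units.ext (by exact_mod_cast h)

lemma Frame.det_sq (h : Frame σ μ A B ε P) :
    P.det * P.det * (A.det : ℂ) = ((∏ i, ε i : ℤˣ) : ℤ) := by
  have := congrArg Matrix.det h.hA
  rw [Matrix.det_mul, Matrix.det_mul, Matrix.det_transpose, Matrix.det_diagonal, cx_det] at this
  rw [Units.coe_prod]
  push_cast
  rw [← this]; ring

lemma Frame.det_ne_zero (h : Frame σ μ A B ε P) : P.det ≠ 0 := by
  intro h0
  have := h.det_sq
  rw [h0, zero_mul, zero_mul] at this
  exact unit_cast_ne_zero _ this.symm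

/-- A real matrix moves frames along the action. -/
lemma Frame.of_congr (h : Frame σ μ A' B' ε P) {γ : Matrix (Fin n) (Fin n) ℝ}
    (hA : A' = γᵀ * A * γ) (hB : B' = γᵀ * B * γ) : Frame σ μ A B ε (cx γ * P) where
  one_of_ne := h.one_of_ne
  conj := h.conj.cx_mul γ
  hA := by
    rw [← h.hA, hA, cx_mul, cx_mul, cx_transpose, Matrix.transpose_mul]
    simp only [Matrix.mul_assoc]
  hB := by
    rw [← h.hB, hB, cx_mul, cx_mul, cx_transpose, Matrix.transpose_mul]
    simp only [Matrix.mul_assoc]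

/-- Changing the signs of the columns, compatibly with conjugation, gives another frame. -/
lemma Frame.mul_signs (h : Frame σ μ A B ε P) {δ : Fin n → ℤˣ} (hδ : ∀ i, δ (σ i) = δ i) :
    Frame σ μ A B ε (P * Matrix.diagonal fun i => ((δ i : ℤ) : ℂ)) where
  one_of_ne := h.one_of_ne
  conj := h.conj.mul_diagonal (by intro i; rw [hδ]; simp)
  hA := by
    rw [Matrix.transpose_mul, Matrix.diagonal_transpose]
    calc _ = Matrix.diagonal (fun i => ((δ i : ℤ) : ℂ)) * (Pᵀ * cx A * P) *
          Matrix.diagonal (fun i => ((δ i : ℤ) : ℂ)) := by simp only [Matrix.mul_assoc]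
      _ = _ := by
        rw [h.hA, Matrix.diagonal_mul_diagonal, Matrix.diagonal_mul_diagonal]
        congr 1; funext i
        linear_combination ((ε i : ℤ) : ℂ) * unit_cast_sq (δ i)
  hB := by
    rw [Matrix.transpose_mul, Matrix.diagonal_transpose]
    calc _ = Matrix.diagonal (fun i => ((δ i : ℤ) : ℂ)) * (Pᵀ * cx B * P) *
          Matrix.diagonal (fun i => ((δ i : ℤ) : ℂ)) := by simp only [Matrix.mul_assoc]
      _ = _ := by
        rw [h.hB, Matrix.diagonal_mul_diagonal, Matrix.diagonal_mul_diagonal]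
        congr 1; funext i
        linear_combination ((ε i : ℤ) : ℂ) * μ i * unit_cast_sq (δ i)

lemma det_mul_signs (P : Matrix (Fin n) (Fin n) ℂ) (δ : Fin n → ℤˣ) :
    (P * Matrix.diagonal fun i => ((δ i : ℤ) : ℂ)).det =
      P.det * ((∏ i, δ i : ℤˣ) : ℤ) := by
  rw [Matrix.det_mul, Matrix.det_diagonal, Units.coe_prod]
  push_cast
  rfl

/-- Two pairs with frames of the same signs and the same determinant are equivalent: the
quotient of the frames is invariant under conjugation, hence real. -/
lemma Frame.exists_equiv (h : Frame σ μ A B ε P) (h' : Frame σ μ A' B' ε P')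
    (hdet : P.det = P'.det) :
    ∃ γ : Matrix.SpecialLinearGroup (Fin n) ℝ, cx γ.1 * P' = P ∧
      A' = γ.1ᵀ * A * γ.1 ∧ B' = γ.1ᵀ * B * γ.1 := by
  have hu : IsUnit P'.det := isUnit_iff_ne_zero.mpr h'.det_ne_zero
  have h1 : P'⁻¹ * P' = 1 := Matrix.nonsing_inv_mul _ hu
  have h2 : P' * P'⁻¹ = 1 := Matrix.mul_nonsing_inv _ hu
  obtain ⟨N, hN⟩ := exists_cx_eq_mul (σ := σ) (c := fun _ => 1) h.conj
    (h'.conj.star_inv h'.det_ne_zero) (by simp)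
  rw [show Matrix.diagonal (fun _ : Fin n => (1 : ℂ)) = 1 from Matrix.diagonal_one,
    Matrix.mul_one] at hN
  have hNP : cx N * P' = P := by rw [hN, Matrix.mul_assoc, h1, Matrix.mul_one]
  have hNdet : N.det = 1 := by
    have := congrArg Matrix.det hNP
    rw [Matrix.det_mul, cx_det, hdet] at this
    have := mul_right_cancel₀ h'.det_ne_zero (this.trans (one_mul _).symm)
    exact_mod_cast this
  have key : ∀ M M' : Matrix (Fin n) (Fin n) ℝ, Pᵀ * cx M * P = P'ᵀ * cx M' * P' →
      M' = Nᵀ * M * N := by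
    intro M M' hM
    apply cx_injective
    rw [cx_mul, cx_mul, cx_transpose]
    have h3 : P'⁻¹ᵀ * P'ᵀ = 1 := by rw [← Matrix.transpose_mul, h2, Matrix.transpose_one]
    calc cx M' = (P'⁻¹ᵀ * P'ᵀ) * cx M' * (P' * P'⁻¹) := by
          rw [h3, h2, Matrix.one_mul, Matrix.mul_one]
      _ = P'⁻¹ᵀ * (P'ᵀ * cx M' * P') * P'⁻¹ := by simp only [Matrix.mul_assoc]
      _ = P'⁻¹ᵀ * (Pᵀ * cx M * P) * P'⁻¹ := by rw [hM]
      _ = _ := by rw [hN, Matrix.transpose_mul]; simp only [Matrix.mul_assoc]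
  exact ⟨⟨N, hNdet⟩, hNP, key _ _ (h.hA.trans h'.hA.symm), key _ _ (h.hB.trans h'.hB.symm)⟩

/-- Frames of a given pair are unique up to signs of the columns. -/
lemma Frame.unique (hμ : Function.Injective μ) (h : Frame σ μ A B ε P)
    (h' : Frame σ μ A B ε' P') :
    ε = ε' ∧ ∃ δ : Fin n → ℤˣ, (∀ i, δ (σ i) = δ i) ∧
      P' = P * Matrix.diagonal fun i => ((δ i : ℤ) : ℂ) := by
  have hu : IsUnit P.det := isUnit_iff_ne_zero.mpr h.det_ne_zero
  have h2 : P * P⁻¹ = 1 := Matrix.mul_nonsing_inv _ hu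
  obtain ⟨M, hM⟩ : ∃ M, M = P⁻¹ * P' := ⟨_, rfl⟩
  have hPM : P * M = P' := by rw [hM, ← Matrix.mul_assoc, h2, Matrix.one_mul]
  set D := Matrix.diagonal fun i => ((ε i : ℤ) : ℂ) with hD
  set D' := Matrix.diagonal fun i => ((ε' i : ℤ) : ℂ) with hD'
  set Λ := Matrix.diagonal μ with hΛ
  have hDA : Mᵀ * D * M = D' := by
    rw [hD, ← h.hA, hD', ← h'.hA, ← hPM, Matrix.transpose_mul P M]
    simp only [Matrix.mul_assoc]
  have hDB : Mᵀ * (D * Λ) * M = D' * Λ := by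
    rw [hD, hΛ, Matrix.diagonal_mul_diagonal, ← h.hB, hD', Matrix.diagonal_mul_diagonal,
      ← h'.hB, ← hPM, Matrix.transpose_mul P M]
    simp only [Matrix.mul_assoc]
  have hcomm : Λ * M = M * Λ := by
    have hne : (Mᵀ * D).det ≠ 0 := by
      intro h0
      have := congrArg Matrix.det hDA
      rw [Matrix.det_mul, h0, zero_mul, hD', Matrix.det_diagonal] at this
      exact Finset.prod_ne_zero_iff.mpr (fun i _ => unit_cast_ne_zero (ε' i)) this.symm
    have h3 : Mᵀ * D * (Λ * M) = Mᵀ * D * (M * Λ) := by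
      rw [← Matrix.mul_assoc (Mᵀ * D) M Λ, hDA, ← hDB]
      simp only [Matrix.mul_assoc]
    exact ((Matrix.isUnit_iff_isUnit_det _).mpr (isUnit_iff_ne_zero.mpr hne)).mul_left_cancel h3
  have hdiag : M = Matrix.diagonal fun i => M i i := by
    ext i j
    by_cases hij : i = j
    · subst hij; simp
    · rw [Matrix.diagonal_apply_ne _ hij]
      have := congrFun (congrFun hcomm i) j
      rw [hΛ, Matrix.diagonal_mul, Matrix.mul_diagonal] at this
      have h5 : (μ i - μ j) * M i j = 0 := by linear_combination this
      exact (mul_eq_zero.mp h5).resolve_left (sub_ne_zero.mpr fun h => hij (hμ h))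
  -- The symmetry of the diagonal entries under conjugation comes from that of `P` and `P'`.
  have hstar : ∀ i, star (M i i) = M (σ i) (σ i) := by
    intro i
    simp only [hM, Matrix.mul_apply, star_sum, star_mul', h.conj.star_inv h.det_ne_zero,
      h'.conj _ i]
  have hsq : ∀ i, M i i * M i i * ((ε i : ℤ) : ℂ) = ((ε' i : ℤ) : ℂ) := by
    intro i
    rw [hdiag, Matrix.diagonal_transpose, hD, hD', Matrix.diagonal_mul_diagonal,
      Matrix.diagonal_mul_diagonal] at hDA
    have := congrFun (congrFun hDA i) i
    simp only [Matrix.diagonal_apply_eq] at this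
    rw [← this]; ring
  have hεε : ε = ε' := by
    funext i
    by_cases hi : σ i = i
    · have h6 := hstar i
      rw [hi] at h6
      have h7 : (((M i i).re : ℝ) : ℂ) = M i i := Complex.conj_eq_iff_re.mp h6
      have h8 := hsq i
      rw [← h7] at h8
      have h9 : (M i i).re * (M i i).re * ((ε i : ℤ) : ℝ) = ((ε' i : ℤ) : ℝ) := by
        exact_mod_cast h8
      rcases Int.units_eq_one_or (ε i) with h1 | h1 <;>
        rcases Int.units_eq_one_or (ε' i) with h2 | h2 <;> rw [h1, h2] at h9 ⊢ <;>
        exfalso <;> push_cast at h9 <;> nlinarith [mul_self_nonneg (M i i).re]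
    · rw [h.one_of_ne i hi, h'.one_of_ne i hi]
  refine ⟨hεε, ?_⟩
  have hδ : ∀ i, ∃ δ : ℤˣ, ((δ : ℤ) : ℂ) = M i i := by
    intro i
    have h1 : M i i * M i i = 1 := by
      have := hsq i
      rw [← hεε] at this
      exact mul_right_cancel₀ (unit_cast_ne_zero (ε i)) (this.trans (one_mul _).symm)
    rcases mul_self_eq_one_iff.mp h1 with h1 | h1
    · exact ⟨1, by simp [h1]⟩
    · exact ⟨-1, by simp [h1]⟩
  choose δ hδ using hδ
  refine ⟨δ, ?_, ?_⟩
  · intro i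
    apply unit_cast_injective
    rw [hδ, ← hstar, ← hδ]
    simp
  · rw [← hPM]
    congr 1
    rw [hdiag]
    congr 1
    funext i
    simp [hδ]

end Frames

/-! ### Existence of frames and of pairs -/

section Existence

variable {n : ℕ} {f : Polynomial ℝ} {A B : Matrix (Fin n) (Fin n) ℝ}
  {σ : Equiv.Perm (Fin n)} {μ : Fin n → ℂ}

/-- The resolvent condition, tested by evaluation at all complex numbers. -/
lemma resPair_iff : ResPair n f A B ↔ A.IsSymm ∧ B.IsSymm ∧
    ∀ z : ℂ, (-1) ^ (n / 2) * (z • cx A - cx B).det = (f.map (algebraMap ℝ ℂ)).eval z := by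
  have key : ∀ z : ℂ, (((-1 : Polynomial ℝ) ^ (n / 2) *
      ((X : Polynomial ℝ) • A.map (fun a => C a) - B.map (fun a => C a)).det).map
        (algebraMap ℝ ℂ)).eval z = (-1) ^ (n / 2) * (z • cx A - cx B).det := by
    intro z
    have h : ∀ p : Polynomial ℝ, (p.map (algebraMap ℝ ℂ)).eval z =
        ((evalRingHom z).comp (mapRingHom (algebraMap ℝ ℂ))) p := fun p => rfl
    rw [h, map_mul, map_pow, map_neg, map_one, RingHom.map_det]
    congr 2
    ext a b
    simp [cx]
    ring
  unfold ResPair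
  refine and_congr_right fun _ => and_congr_right fun _ => ⟨?_, ?_⟩
  · intro h z
    rw [← key, h]
  · intro h
    apply Polynomial.map_injective _ (algebraMap ℝ ℂ).injective
    apply Polynomial.funext
    intro z
    rw [key, h]

lemma det_of_resPair (hf : f.Monic) (hdeg : f.natDegree = n) (h : ResPair n f A B) :
    A.det = (-1) ^ (n / 2) := by
  have h1 := congrArg (fun p => Polynomial.coeff p n) h.2.2
  have h2 : ((X : Polynomial ℝ) • A.map (fun a => C a) - B.map (fun a => C a)) =
      (X : Polynomial ℝ) • A.map C + (-B).map C := by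
    ext a b : 1
    simp [sub_eq_add_neg]
  have h3 := Polynomial.coeff_det_X_add_C_card A (-B)
  rw [Fintype.card_fin] at h3
  have h4 : f.coeff n = 1 := by rw [← hdeg]; exact hf
  have h5 : (-1 : Polynomial ℝ) ^ (n / 2) = C ((-1) ^ (n / 2)) := by simp
  simp only [h2, h4, h5, Polynomial.coeff_C_mul, h3] at h1
  have h6 : ((-1 : ℝ) ^ (n / 2)) * (-1) ^ (n / 2) = 1 := by
    rw [← mul_pow]; simp
  calc A.det = ((-1 : ℝ) ^ (n / 2) * (-1) ^ (n / 2)) * A.det := by rw [h6, one_mul]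
    _ = (-1 : ℝ) ^ (n / 2) := by rw [mul_assoc, h1, mul_one]

/-- Every pair with resolvent `f` has a frame. Eigenvectors for distinct eigenvalues are linearly
independent and `A`-orthogonal, and every nonzero complex number is a square, while a nonzero
real number is a square up to sign. -/
lemma exists_frame (hf : f.Monic) (hdeg : f.natDegree = n) (hμ : Function.Injective μ)
    (hfμ : f.map (algebraMap ℝ ℂ) = ∏ i, (X - C (μ i))) (hμσ : ∀ i, μ (σ i) = star (μ i))
    (hσ : ∀ i, σ (σ i) = i) (h : ResPair n f A B) : ∃ ε P, Frame σ μ A B ε P := by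
  have hdetA : A.det ≠ 0 := by rw [det_of_resPair hf hdeg h]; simp
  have hdetcA : (cx A).det ≠ 0 := by rw [cx_det]; exact_mod_cast hdetA
  have hsing : ∀ i, (μ i • cx A - cx B).det = 0 := by
    intro i
    have h1 := (resPair_iff.mp h).2.2 (μ i)
    rw [hfμ, Polynomial.eval_prod, Finset.prod_eq_zero (Finset.mem_univ i) (by simp)] at h1
    exact (mul_eq_zero.mp h1).resolve_left (by simp)
  -- Eigenvectors, compatible with conjugation.
  obtain ⟨v, hv, hvσ⟩ := exists_conj_family (Y := Fin n → ℂ) hσ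
    (fun i v => v ≠ 0 ∧ cx B *ᵥ v = μ i • (cx A *ᵥ v))
    (by
      rintro i y ⟨hy0, hy⟩
      refine ⟨by simpa using hy0, ?_⟩
      have hst : ∀ M : Matrix (Fin n) (Fin n) ℝ, cx M *ᵥ star y = star (cx M *ᵥ y) := by
        intro M
        funext a
        simp only [Matrix.mulVec, dotProduct, Pi.star_apply, star_sum, star_mul']
        apply Finset.sum_congr rfl
        intro b _
        congr 1
        exact (Complex.conj_ofReal _).symm
      rw [hst, hst, hy, hμσ, star_smul])
    (by
      intro i
      obtain ⟨v, hv0, hv⟩ := Matrix.exists_mulVec_eq_zero_iff.mpr (hsing i)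
      refine ⟨v, hv0, ?_⟩
      rw [Matrix.sub_mulVec, Matrix.smul_mulVec, sub_eq_zero] at hv
      exact hv.symm)
    (by
      intro i hi
      have h1 : star (μ i) = μ i := by rw [← hμσ, hi]
      have h2 : (((μ i).re : ℝ) : ℂ) = μ i := Complex.conj_eq_iff_re.mp h1
      have h3 : ((μ i).re • A - B).det = 0 := by
        have h4 := hsing i
        have h5 : μ i • cx A - cx B = cx ((μ i).re • A - B) := by
          ext a b
          rw [← h2]
          simp [cx]
        rw [h5, cx_det] at h4
        exact_mod_cast h4
      obtain ⟨v, hv0, hv⟩ := Matrix.exists_mulVec_eq_zero_iff.mpr h3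
      rw [Matrix.sub_mulVec, Matrix.smul_mulVec, sub_eq_zero] at hv
      have hcv : ∀ M : Matrix (Fin n) (Fin n) ℝ,
          cx M *ᵥ (fun a => (v a : ℂ)) = fun a => ((M *ᵥ v) a : ℂ) := by
        intro M
        funext a
        simp [Matrix.mulVec, dotProduct, cx]
      refine ⟨fun a => (v a : ℂ), ⟨?_, ?_⟩, ?_⟩
      · intro h0
        apply hv0
        funext a
        have h6 : (v a : ℂ) = 0 := congrFun h0 a
        exact_mod_cast h6
      · rw [hcv, hcv, ← hv]
        funext a
        rw [← h2]
        simp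
      · funext a
        exact Complex.conj_ofReal _)
  let Q : Matrix (Fin n) (Fin n) ℂ := Matrix.of fun a i => v i a
  have hQconj : ConjCols σ Q := by
    intro a i
    exact congrFun (hvσ i) a
  have hQdet : Q.det ≠ 0 := by
    have hli : LinearIndependent ℂ v := by
      apply Module.End.eigenvectors_linearIndependent'
        (Matrix.toLin' ((cx A)⁻¹ * cx B)) μ hμ
      intro i
      rw [Module.End.hasEigenvector_iff, Module.End.mem_eigenspace_iff]
      refine ⟨?_, (hv i).1⟩
      rw [Matrix.toLin'_apply, ← Matrix.mulVec_mulVec, (hv i).2, Matrix.mulVec_smul,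
        Matrix.mulVec_mulVec, Matrix.nonsing_inv_mul _ (isUnit_iff_ne_zero.mpr hdetcA),
        Matrix.one_mulVec]
    have : IsUnit Q := Matrix.linearIndependent_cols_iff_isUnit.mp hli
    exact isUnit_iff_ne_zero.mp ((Matrix.isUnit_iff_isUnit_det _).mp this)
  have hBQ : cx B * Q = cx A * Q * Matrix.diagonal μ := by
    ext a i
    rw [Matrix.mul_diagonal]
    have := congrFun (hv i).2 a
    rw [Pi.smul_apply, smul_eq_mul, mul_comm] at this
    exact this
  let G := Qᵀ * cx A * Q
  have hsymA : (cx A)ᵀ = cx A := by rw [← cx_transpose, h.1]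
  have hsymB : (cx B)ᵀ = cx B := by rw [← cx_transpose, h.2.1]
  have hG1 : Qᵀ * cx B * Q = G * Matrix.diagonal μ := by
    rw [Matrix.mul_assoc, hBQ]
    simp only [G, Matrix.mul_assoc]
  have hGt : Gᵀ = G := by
    simp only [G, Matrix.transpose_mul, Matrix.transpose_transpose, hsymA, Matrix.mul_assoc]
  have hG2 : G * Matrix.diagonal μ = Matrix.diagonal μ * G := by
    have : (Qᵀ * cx B * Q)ᵀ = Qᵀ * cx B * Q := by
      simp only [Matrix.transpose_mul, Matrix.transpose_transpose, hsymB, Matrix.mul_assoc]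
    rw [hG1, Matrix.transpose_mul, hGt, Matrix.diagonal_transpose] at this
    exact this.symm
  let c : Fin n → ℂ := fun i => G i i
  have hGc : G = Matrix.diagonal c := by
    ext i j
    by_cases hij : i = j
    · subst hij; simp [c]
    · rw [Matrix.diagonal_apply_ne _ hij]
      have := congrFun (congrFun hG2 i) j
      rw [Matrix.diagonal_mul, Matrix.mul_diagonal] at this
      have h5 : (μ i - μ j) * G i j = 0 := by linear_combination -this
      exact (mul_eq_zero.mp h5).resolve_left (sub_ne_zero.mpr fun h => hij (hμ h))
  have hc0 : ∀ i, c i ≠ 0 := by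
    intro i hi
    have h1 : G.det ≠ 0 := by
      simp only [G, Matrix.det_mul, Matrix.det_transpose]
      exact mul_ne_zero (mul_ne_zero hQdet hdetcA) hQdet
    rw [hGc, Matrix.det_diagonal] at h1
    exact h1 (Finset.prod_eq_zero (Finset.mem_univ i) hi)
  have hcσ : ∀ i, star (c i) = c (σ i) := by
    intro i
    have := hQconj.cx_mul A
    simp only [c, G, Matrix.mul_assoc]
    rw [Matrix.mul_apply, Matrix.mul_apply]
    simp only [star_sum, star_mul', Matrix.transpose_apply, hQconj _ i, this _ i]
  -- The sign of the Gram entry at a real root.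
  let ε : Fin n → ℤˣ := fun i => if σ i = i ∧ (c i).re < 0 then -1 else 1
  have hε1 : ∀ i, σ i ≠ i → ε i = 1 := by
    intro i hi
    simp [ε, hi]
  obtain ⟨z, hz, hzσ⟩ := exists_conj_family (Y := ℂ) hσ
    (fun i z => c i = ((ε i : ℤ) : ℂ) * (z * z))
    (by
      intro i y hy
      rw [sign_invariant hσ hε1, ← hcσ, hy]
      simp)
    (by
      intro i
      obtain ⟨z, hz⟩ := IsAlgClosed.exists_pow_nat_eq (((ε i : ℤ) : ℂ) * c i) (n := 2) two_pos
      refine ⟨z, ?_⟩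
      rw [← pow_two, hz, ← mul_assoc, unit_cast_sq, one_mul])
    (by
      intro i hi
      have h1 : star (c i) = c i := by rw [hcσ, hi]
      have h2 : (((c i).re : ℝ) : ℂ) = c i := Complex.conj_eq_iff_re.mp h1
      refine ⟨((√|(c i).re| : ℝ) : ℂ), ?_, Complex.conj_ofReal _⟩
      rw [← Complex.ofReal_mul, Real.mul_self_sqrt (abs_nonneg _)]
      by_cases hneg : (c i).re < 0
      · rw [abs_of_neg hneg, ← h2]
        simp [ε, hi, hneg]
      · rw [abs_of_nonneg (not_lt.mp hneg), ← h2]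
        simp [ε, hneg])
  have hz0 : ∀ i, z i ≠ 0 := by
    intro i h0
    apply hc0 i
    rw [hz i, h0]
    simp
  refine ⟨ε, Q * Matrix.diagonal fun i => (z i)⁻¹, hε1, ?_, ?_, ?_⟩
  · apply hQconj.mul_diagonal
    intro i
    rw [star_inv₀, hzσ]
  · rw [Matrix.transpose_mul, Matrix.diagonal_transpose]
    calc _ = Matrix.diagonal (fun i => (z i)⁻¹) * G * Matrix.diagonal (fun i => (z i)⁻¹) := by
          simp only [G, Matrix.mul_assoc]
      _ = _ := by
        rw [hGc, Matrix.diagonal_mul_diagonal, Matrix.diagonal_mul_diagonal]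
        congr 1; funext i
        rw [hz i]
        field_simp [hz0 i]
  · rw [Matrix.transpose_mul, Matrix.diagonal_transpose]
    calc _ = Matrix.diagonal (fun i => (z i)⁻¹) * (Qᵀ * cx B * Q) *
          Matrix.diagonal (fun i => (z i)⁻¹) := by
          simp only [Matrix.mul_assoc]
      _ = _ := by
        rw [hG1, hGc, Matrix.diagonal_mul_diagonal, Matrix.diagonal_mul_diagonal,
          Matrix.diagonal_mul_diagonal]
        congr 1; funext i
        rw [hz i]
        field_simp [hz0 i]

/-- The determinant of a frame satisfies `d² = sign σ`, because `|d|² = sign σ · d²` and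
`d² · det A = ± 1`; this also determines the product of the signs. -/
lemma Frame.det_eq (hdet : A.det = (-1) ^ (n / 2)) {ε : Fin n → ℤˣ}
    {P : Matrix (Fin n) (Fin n) ℂ} (h : Frame σ μ A B ε P) :
    P.det * P.det = ((Equiv.Perm.sign σ : ℤ) : ℂ) ∧
      ∏ i, ε i = Equiv.Perm.sign σ * (-1) ^ (n / 2) := by
  have h1 := h.det_sq
  have h2 := h.conj.star_det
  have h3 : P.det * star P.det = ((Complex.normSq P.det : ℝ) : ℂ) := Complex.mul_conj _
  rw [h2] at h3
  have hpos : 0 < Complex.normSq P.det := Complex.normSq_pos.mpr h.det_ne_zero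
  rw [hdet] at h1
  generalize (∏ i, ε i) = p at *
  generalize Equiv.Perm.sign σ = s at *
  obtain ⟨u, hu, hu'⟩ : ∃ u : ℤˣ, u = (-1) ^ (n / 2) ∧
      ((((-1 : ℝ) ^ (n / 2) : ℝ)) : ℂ) = ((u : ℤ) : ℂ) := ⟨_, rfl, by push_cast; rfl⟩
  rw [hu'] at h1
  rw [← hu]
  generalize Complex.normSq P.det = t at *
  have h4 : ((t : ℝ) : ℂ) = ((s : ℤ) : ℂ) * ((u : ℤ) : ℂ) * ((p : ℤ) : ℂ) := by
    rw [← h3, ← h1]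
    linear_combination (-P.det * P.det * ((s : ℤ) : ℂ)) * unit_cast_sq u
  have h5 : t = ((s : ℤ) : ℝ) * ((u : ℤ) : ℝ) * ((p : ℤ) : ℝ) := by exact_mod_cast h4
  have h6 : p = s * u := by
    rcases Int.units_eq_one_or s with rfl | rfl <;> rcases Int.units_eq_one_or u with h | h <;>
      rcases Int.units_eq_one_or p with rfl | rfl <;> rw [h] at h5 ⊢ <;>
      first | decide | (exfalso; push_cast at h5; linarith)
  refine ⟨?_, h6⟩
  rw [h6] at h1
  push_cast at h1
  linear_combination ((u : ℤ) : ℂ) * h1 + (((s : ℤ) : ℂ) - P.det * P.det) * unit_cast_sq u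

/-- Conversely, every admissible sign vector and every admissible determinant occur. The frame
is a transposed Vandermonde matrix, with one row rescaled by a real number to adjust the
determinant. -/
lemma exists_pair (hn : 0 < n) (hμ : Function.Injective μ)
    (hfμ : f.map (algebraMap ℝ ℂ) = ∏ i, (X - C (μ i))) (hμσ : ∀ i, μ (σ i) = star (μ i))
    (hσ : ∀ i, σ (σ i) = i) {ε : Fin n → ℤˣ}
    (hε : Admissible σ (Equiv.Perm.sign σ * (-1) ^ (n / 2)) ε) {d : ℂ}
    (hd : d * d = ((Equiv.Perm.sign σ : ℤ) : ℂ))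
    (hd' : star d = ((Equiv.Perm.sign σ : ℤ) : ℂ) * d) :
    ∃ p : Matrix (Fin n) (Fin n) ℝ × Matrix (Fin n) (Fin n) ℝ, ResPair n f p.1 p.2 ∧
      ∃ P, Frame σ μ p.1 p.2 ε P ∧ P.det = d := by
  let Q : Matrix (Fin n) (Fin n) ℂ := (Matrix.vandermonde μ)ᵀ
  have hQdet : Q.det ≠ 0 := by
    rw [Matrix.det_transpose]
    exact Matrix.det_vandermonde_ne_zero_iff.mpr hμ
  have hQconj : ConjCols σ Q := by
    intro a i
    simp [Q, Matrix.vandermonde_apply, hμσ]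
  have hdQ : star (d / Q.det) = d / Q.det := by
    rw [star_div₀, hd', hQconj.star_det, mul_div_mul_left _ _ (unit_cast_ne_zero _)]
  have ht : (((d / Q.det).re : ℝ) : ℂ) = d / Q.det := Complex.conj_eq_iff_re.mp hdQ
  let N : Matrix (Fin n) (Fin n) ℝ :=
    Matrix.diagonal (Function.update 1 ⟨0, hn⟩ (d / Q.det).re)
  have hN : N.det = (d / Q.det).re := by
    simp only [N, Matrix.det_diagonal]
    rw [Finset.prod_update_of_mem (Finset.mem_univ _)]
    simp
  obtain ⟨P, hP⟩ : ∃ P, P = cx N * Q := ⟨_, rfl⟩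
  have hPdet : P.det = d := by
    rw [hP, Matrix.det_mul, cx_det, hN, ht, div_mul_cancel₀ _ hQdet]
  have hPconj : ConjCols σ P := hP ▸ hQconj.cx_mul N
  have hd0 : P.det ≠ 0 := by
    rw [hPdet]
    rintro rfl
    rw [mul_zero] at hd
    exact unit_cast_ne_zero _ hd.symm
  have hinv := hPconj.star_inv hd0
  have h1 : P⁻¹ * P = 1 := Matrix.nonsing_inv_mul _ (isUnit_iff_ne_zero.mpr hd0)
  have h2 : Pᵀ * P⁻¹ᵀ = 1 := by rw [← Matrix.transpose_mul, h1, Matrix.transpose_one]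
  obtain ⟨A, hA⟩ := exists_cx_eq_mul (σ := σ) (L := P⁻¹ᵀ) (R := P⁻¹)
    (c := fun i => ((ε i : ℤ) : ℂ)) (fun a i => hinv i a) hinv
    (fun i => by rw [sign_invariant hσ hε.1]; simp)
  obtain ⟨B, hB⟩ := exists_cx_eq_mul (σ := σ) (L := P⁻¹ᵀ) (R := P⁻¹)
    (c := fun i => ((ε i : ℤ) : ℂ) * μ i) (fun a i => hinv i a) hinv
    (fun i => by rw [sign_invariant hσ hε.1, hμσ]; simp)
  have hgram : ∀ D : Matrix (Fin n) (Fin n) ℂ, Pᵀ * (P⁻¹ᵀ * D * P⁻¹) * P = D := by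
    intro D
    calc _ = (Pᵀ * P⁻¹ᵀ) * D * (P⁻¹ * P) := by simp only [Matrix.mul_assoc]
      _ = D := by rw [h1, h2, Matrix.one_mul, Matrix.mul_one]
  have hsymm : ∀ (M : Matrix (Fin n) (Fin n) ℝ) (c : Fin n → ℂ),
      cx M = P⁻¹ᵀ * Matrix.diagonal c * P⁻¹ → M.IsSymm := by
    intro M c hM
    apply cx_injective
    rw [cx_transpose, hM]
    simp only [Matrix.transpose_mul, Matrix.transpose_transpose, Matrix.diagonal_transpose,
      Matrix.mul_assoc]
  refine ⟨(A, B), resPair_iff.mpr ⟨hsymm A _ hA, hsymm B _ hB, ?_⟩, P,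
    ⟨hε.1, hPconj, by rw [hA, hgram], by rw [hB, hgram]⟩, hPdet⟩
  intro z
  have h3 : z • cx A - cx B =
      P⁻¹ᵀ * Matrix.diagonal (fun i => ((ε i : ℤ) : ℂ) * (z - μ i)) * P⁻¹ := by
    rw [hA, hB, ← Matrix.smul_mul, ← Matrix.mul_smul, ← Matrix.sub_mul, ← Matrix.mul_sub]
    congr 2
    ext i j
    by_cases hij : i = j
    · subst hij; simp; ring
    · simp [hij]
  have h4 : P⁻¹.det * P⁻¹.det = ((Equiv.Perm.sign σ : ℤ) : ℂ) := by
    have h5 : P⁻¹.det * P.det = 1 := by rw [← Matrix.det_mul, h1, Matrix.det_one]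
    rw [hPdet] at h5
    have h6 := unit_cast_sq (Equiv.Perm.sign σ)
    have h7 : P⁻¹.det * P⁻¹.det * (d * d) = 1 := by
      linear_combination (P⁻¹.det * d + 1) * h5
    rw [hd] at h7
    linear_combination ((Equiv.Perm.sign σ : ℤ) : ℂ) * h7 - (P⁻¹.det * P⁻¹.det) * h6
  have h8 : (∏ i, ((ε i : ℤ) : ℂ)) = ((Equiv.Perm.sign σ : ℤ) : ℂ) * (-1) ^ (n / 2) := by
    have := congrArg (fun u : ℤˣ => ((u : ℤ) : ℂ)) hε.2
    simp only [Units.coe_prod] at this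
    push_cast at this
    exact this
  rw [h3, Matrix.det_mul, Matrix.det_mul, Matrix.det_transpose, Matrix.det_diagonal,
    Finset.prod_mul_distrib, h8, hfμ, Polynomial.eval_prod]
  simp only [Polynomial.eval_sub, Polynomial.eval_X, Polynomial.eval_C]
  have h9 : ((-1 : ℂ) ^ (n / 2)) * (-1) ^ (n / 2) = 1 := by
    rw [← mul_pow]; simp
  have h6 := unit_cast_sq (Equiv.Perm.sign σ)
  generalize (-1 : ℂ) ^ (n / 2) = u at *
  generalize ((Equiv.Perm.sign σ : ℤ) : ℂ) = s at *
  generalize ∏ i, (z - μ i) = w at *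
  linear_combination u * u * s * w * h4 + s * s * w * h9 + w * h6

end Existence

/-! ### Orbits and stabilisers -/

section Orbits

variable {n : ℕ} {A B : Matrix (Fin n) (Fin n) ℝ} {σ : Equiv.Perm (Fin n)} {μ : Fin n → ℂ}
  {ε : Fin n → ℤˣ} {P : Matrix (Fin n) (Fin n) ℂ}

/-- The stabiliser of a pair acts on a frame by the conjugation-invariant sign changes of the
columns; membership in `SL_n` means that the product of the signs is `1`. -/
lemma card_stabiliser (hμ : Function.Injective μ) (h : Frame σ μ A B ε P) :
    Nat.card {γ : Matrix.SpecialLinearGroup (Fin n) ℝ //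
      (γ : Matrix (Fin n) (Fin n) ℝ)ᵀ * A * (γ : Matrix (Fin n) (Fin n) ℝ) = A ∧
      (γ : Matrix (Fin n) (Fin n) ℝ)ᵀ * B * (γ : Matrix (Fin n) (Fin n) ℝ) = B} =
    Nat.card {δ : Fin n → ℤˣ // (∀ i, δ (σ i) = δ i) ∧ ∏ i, δ i = 1} := by
  have hu : IsUnit P.det := isUnit_iff_ne_zero.mpr h.det_ne_zero
  have h1 : P⁻¹ * P = 1 := Matrix.nonsing_inv_mul _ hu
  have h2 : P * P⁻¹ = 1 := Matrix.mul_nonsing_inv _ hu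
  have hex : ∀ δ : {δ : Fin n → ℤˣ // (∀ i, δ (σ i) = δ i) ∧ ∏ i, δ i = 1},
      ∃ γ : {γ : Matrix.SpecialLinearGroup (Fin n) ℝ // γ.1ᵀ * A * γ.1 = A ∧ γ.1ᵀ * B * γ.1 = B},
        cx γ.1.1 * P = P * Matrix.diagonal fun i => ((δ.1 i : ℤ) : ℂ) := by
    intro δ
    obtain ⟨γ, h3, h4, h5⟩ := (h.mul_signs δ.2.1).exists_equiv h (by
      rw [det_mul_signs, δ.2.2]; simp)
    exact ⟨⟨γ, h4.symm, h5.symm⟩, h3⟩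
  choose F hF using hex
  symm
  refine Nat.card_eq_of_bijective F ⟨?_, ?_⟩
  · intro δ δ' hδ
    have h3 := hF δ
    rw [hδ, hF δ'] at h3
    have h4 := congrArg (fun Z => P⁻¹ * Z) h3
    simp only [← Matrix.mul_assoc, h1, Matrix.one_mul] at h4
    apply Subtype.ext
    funext i
    exact unit_cast_injective (congrFun (Matrix.diagonal_injective h4) i).symm
  · intro γ
    obtain ⟨-, δ, hδ, hP⟩ := h.unique hμ (h.of_congr γ.2.1.symm γ.2.2.symm)
    have hprod : ∏ i, δ i = 1 := by
      have h3 := congrArg Matrix.det hP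
      rw [det_mul_signs, Matrix.det_mul, cx_det, γ.1.2] at h3
      apply unit_cast_injective
      apply mul_left_cancel₀ h.det_ne_zero
      rw [← h3]
      simp
    refine ⟨⟨δ, hδ, hprod⟩, ?_⟩
    have h3 : cx (F ⟨δ, hδ, hprod⟩).1.1 * P = cx γ.1.1 * P := by rw [hF, hP]
    have h4 := congrArg (fun Z => Z * P⁻¹) h3
    simp only [Matrix.mul_assoc, h2, Matrix.mul_one] at h4
    exact Subtype.ext (Subtype.ext (cx_injective h4))

/-- A square root of the sign `s` which conjugation multiplies by `s`, as it does the determinant of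
a frame when `s = sign σ`. -/
lemma exists_det_value (s : ℤˣ) :
    ∃ d : ℂ, d ≠ 0 ∧ d * d = ((s : ℤ) : ℂ) ∧ star d = ((s : ℤ) : ℂ) * d := by
  rcases Int.units_eq_one_or s with rfl | rfl
  · exact ⟨1, by simp⟩
  · exact ⟨Complex.I, by simp⟩

/-- Flipping the sign of the column at a real root changes the sign of the determinant. -/
lemma Frame.exists_neg_det (h : Frame σ μ A B ε P) {i₀ : Fin n} (hi₀ : σ i₀ = i₀) :
    ∃ P', Frame σ μ A B ε P' ∧ P'.det = -P.det := by
  refine ⟨_, h.mul_signs (δ := Function.update 1 i₀ (-1)) ?_, ?_⟩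
  · intro i
    by_cases hi : i = i₀
    · rw [hi, hi₀]
    · rw [Function.update_of_ne hi, Function.update_of_ne]
      · rfl
      · rw [← hi₀]
        exact fun h => hi (σ.injective h)
  · rw [det_mul_signs, Finset.prod_update_of_mem (Finset.mem_univ _)]
    simp

end Orbits

end RealOrbits

/-- **Real orbits and stabilisers for pairs of symmetric matrices with fixed resolvent.**
Let `n` be a positive even integer and `f ∈ ℝ[x]` monic of degree `n` with `n` distinct
complex roots, exactly `r₁` of them real (so `2r₂ = n − r₁` non-real).  If `r₁ = 0`, the
set `V_f` of pairs of real symmetric matrices with resolvent `f` is nonempty, consists of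
exactly `2` orbits of `SL_n(ℝ)`, and all stabilisers have order `2^(r₂)`.  If `r₁ > 0`,
then `V_f` consists of exactly `2^(r₁−1)` orbits and all stabilisers have order
`2^(r₁+r₂−1)`. -/
theorem real_orbits_and_stabilisers (n r₁ r₂ : ℕ) (hn : 0 < n) (hn_even : Even n)
    (hsig : r₁ + 2 * r₂ = n) (f : Polynomial ℝ) (hf : f.Monic) (hdeg : f.natDegree = n)
    (hdist : (f.map (algebraMap ℝ ℂ)).roots.toFinset.card = n)
    (hreal : f.roots.toFinset.card = r₁) :
    (r₁ = 0 →
      (∃ A B, ResPair n f A B) ∧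
      (∃ reps : Fin 2 → Matrix (Fin n) (Fin n) ℝ × Matrix (Fin n) (Fin n) ℝ,
        (∀ k, ResPair n f (reps k).1 (reps k).2) ∧
        (∀ k l, k ≠ l → ¬ OrbEquiv n (reps k).1 (reps k).2 (reps l).1 (reps l).2) ∧
        (∀ A B, ResPair n f A B → ∃ k, OrbEquiv n (reps k).1 (reps k).2 A B)) ∧
      (∀ A B, ResPair n f A B →
        Nat.card {γ : Matrix.SpecialLinearGroup (Fin n) ℝ //
          (γ : Matrix (Fin n) (Fin n) ℝ)ᵀ * A * (γ : Matrix (Fin n) (Fin n) ℝ) = A ∧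
          (γ : Matrix (Fin n) (Fin n) ℝ)ᵀ * B * (γ : Matrix (Fin n) (Fin n) ℝ) = B} =
        2 ^ r₂)) ∧
    (0 < r₁ →
      (∃ reps : Fin (2 ^ (r₁ - 1)) → Matrix (Fin n) (Fin n) ℝ × Matrix (Fin n) (Fin n) ℝ,
        (∀ k, ResPair n f (reps k).1 (reps k).2) ∧
        (∀ k l, k ≠ l → ¬ OrbEquiv n (reps k).1 (reps k).2 (reps l).1 (reps l).2) ∧
        (∀ A B, ResPair n f A B → ∃ k, OrbEquiv n (reps k).1 (reps k).2 A B)) ∧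
      (∀ A B, ResPair n f A B →
        Nat.card {γ : Matrix.SpecialLinearGroup (Fin n) ℝ //
          (γ : Matrix (Fin n) (Fin n) ℝ)ᵀ * A * (γ : Matrix (Fin n) (Fin n) ℝ) = A ∧
          (γ : Matrix (Fin n) (Fin n) ℝ)ᵀ * B * (γ : Matrix (Fin n) (Fin n) ℝ) = B} =
        2 ^ (r₁ + r₂ - 1))) := by
  classical
  obtain ⟨μ, σ, hμ, hfμ, hμσ, hr⟩ := RealOrbits.exists_enumeration n r₁ f hf hdeg hdist hreal
  have hσ : ∀ i, σ (σ i) = i := fun i => hμ (by rw [hμσ, hμσ, star_star])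
  obtain ⟨d, hd0, hd, hd'⟩ := RealOrbits.exists_det_value (Equiv.Perm.sign σ)
  -- The normal form of an arbitrary pair: its determinant is `d` or `-d`.
  have hform : ∀ A B, ResPair n f A B → ∃ ε P, RealOrbits.Frame σ μ A B ε P ∧
      RealOrbits.Admissible σ (Equiv.Perm.sign σ * (-1) ^ (n / 2)) ε ∧
      (P.det = d ∨ P.det = -d) := by
    intro A B h
    obtain ⟨ε, P, hP⟩ := RealOrbits.exists_frame hf hdeg hμ hfμ hμσ hσ h
    obtain ⟨h1, h2⟩ := hP.det_eq (RealOrbits.det_of_resPair hf hdeg h)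
    exact ⟨ε, P, hP, ⟨hP.one_of_ne, h2⟩, mul_self_eq_mul_self_iff.mp (h1.trans hd.symm)⟩
  constructor
  · rintro rfl
    have hfix : ∀ i, σ i ≠ i := by
      intro i hi
      have : Nonempty {i // σ i = i} := ⟨⟨i, hi⟩⟩
      exact Nat.card_pos.ne' hr
    have hsign : Equiv.Perm.sign σ * (-1) ^ (n / 2) = 1 := by
      rw [RealOrbits.sign_of_no_fixed hσ hfix hn, ← mul_pow]
      simp
    have hone : RealOrbits.Admissible σ (Equiv.Perm.sign σ * (-1) ^ (n / 2)) 1 :=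
      ⟨fun _ _ => rfl, by rw [hsign]; simp⟩
    obtain ⟨p, hp, P, hP, hPd⟩ := RealOrbits.exists_pair hn hμ hfμ hμσ hσ hone hd hd'
    obtain ⟨q, hq, Q, hQ, hQd⟩ := RealOrbits.exists_pair hn hμ hfμ hμσ hσ hone (d := -d)
      (by rw [neg_mul_neg, hd]) (by rw [star_neg, hd', mul_neg])
    -- In the absence of real roots the determinant of a frame is an invariant of the orbit.
    have hinv : ∀ {A B A' B' : Matrix (Fin n) (Fin n) ℝ} {R R' : Matrix (Fin n) (Fin n) ℂ},
        RealOrbits.Frame σ μ A B 1 R → RealOrbits.Frame σ μ A' B' 1 R' →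
        OrbEquiv n A B A' B' → R.det = R'.det := by
      rintro A B A' B' R R' hR hR' ⟨γ, hA, hB⟩
      obtain ⟨-, δ, hδ, h1⟩ := hR.unique hμ (hR'.of_congr hA hB)
      have h2 := congrArg Matrix.det h1
      rw [RealOrbits.det_mul_signs, RealOrbits.prod_invariant hσ δ hδ, Matrix.det_mul,
        RealOrbits.cx_det, γ.2] at h2
      simpa [hfix] using h2.symm
    have hneg : d ≠ -d := fun h => hd0 (self_eq_neg.mp h)
    refine ⟨⟨p.1, p.2, hp⟩, ⟨![p, q], ?_, ?_, ?_⟩, ?_⟩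
    · intro k
      fin_cases k
      · exact hp
      · exact hq
    · intro k l hkl h
      fin_cases k <;> fin_cases l
      · exact hkl rfl
      · have := hinv hP hQ h
        rw [hPd, hQd] at this
        exact hneg this
      · have := hinv hQ hP h
        rw [hPd, hQd] at this
        exact hneg this.symm
      · exact hkl rfl
    · intro A B h
      obtain ⟨ε, R, hR, hε, hRd⟩ := hform A B h
      have hε1 : ε = 1 := funext fun i => hε.1 i (hfix i)
      subst hε1
      rcases hRd with hRd | hRd
      · obtain ⟨γ, -, hγ⟩ := hP.exists_equiv hR (hPd.trans hRd.symm)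
        exact ⟨0, γ, hγ⟩
      · obtain ⟨γ, -, hγ⟩ := hQ.exists_equiv hR (hQd.trans hRd.symm)
        exact ⟨1, γ, hγ⟩
    · intro A B h
      obtain ⟨ε, R, hR, -⟩ := hform A B h
      rw [RealOrbits.card_stabiliser hμ hR, RealOrbits.card_invariant_of_no_fixed hσ hsig hr]
  · intro h0
    obtain ⟨i₀, hi₀⟩ : Nonempty {i // σ i = i} := by
      rw [← hr] at h0
      exact (Nat.card_pos_iff.mp h0).1
    constructor
    · let e := (Finite.equivFinOfCardEq (RealOrbits.card_admissible hr h0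
        (Equiv.Perm.sign σ * (-1) ^ (n / 2)))).symm
      have hex := fun k => RealOrbits.exists_pair hn hμ hfμ hμσ hσ (e k).2 hd hd'
      choose reps hreps P hP hPd using hex
      refine ⟨reps, hreps, ?_, ?_⟩
      · rintro k l hkl ⟨γ, hA, hB⟩
        have := ((hP k).unique hμ ((hP l).of_congr hA hB)).1
        exact hkl (e.injective (Subtype.ext this))
      · intro A B h
        obtain ⟨ε, R, hR, hε, hRd⟩ := hform A B h
        obtain ⟨R', hR', hRd'⟩ : ∃ R', RealOrbits.Frame σ μ A B ε R' ∧ R'.det = d := by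
          rcases hRd with hRd | hRd
          · exact ⟨R, hR, hRd⟩
          · obtain ⟨R', h1, h2⟩ := hR.exists_neg_det hi₀
            exact ⟨R', h1, by rw [h2, hRd, neg_neg]⟩
        obtain ⟨k, hk⟩ := e.surjective ⟨ε, hε⟩
        have hPk := hP k
        rw [hk] at hPk
        obtain ⟨γ, -, hγ⟩ := hPk.exists_equiv hR' ((hPd k).trans hRd'.symm)
        exact ⟨k, γ, hγ⟩
    · intro A B h
      obtain ⟨ε, R, hR, -⟩ := hform A B h
      rw [RealOrbits.card_stabiliser hμ hR, RealOrbits.card_invariant_of_fixed hσ hsig hr h0]
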